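/- Let A be a Q(q)-algebra, let B_i, B_j ∈ A, and let Z be a central element of A. Define the ı-divided powers B^{(m)}_{i,p̄} of B_i (p̄ ∈ Z/2) with central parameter Z as in the closed formulas of the paper. Suppose that the minimal-degree ıSerre relation ∑_{r+s=2} (−1)^r B^{(r)}_{i,p̄} B_j B^{(s)}_{i,p̄+1̄} = 0 holds for both parities p̄ (the case a_{ij} = −1, n = 1). Then the next relation of the same shape in degree 4 also holds for both parities: ∑_{r+s=4} (−1)^r B^{(r)}_{i,p̄} B_j B^{(s)}_{i,p̄+1̄} = 0. -/

import Mathlib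

noncomputable section

abbrev K : Type := RatFunc ℚ

/-- The indeterminate `q` in `ℚ(q)`. -/
def qq : K := RatFunc.X

/-- Balanced quantum integer at base `x`. -/
def qintx (x : K) (m : ℤ) : K := (x ^ m - x ^ (-m)) / (x - x⁻¹)

/-- Balanced quantum integer `[m]_q`. -/
def qint (m : ℤ) : K := qintx qq m

/-- Quantum factorial at base `x`. -/
def qfactx (x : K) (m : ℕ) : K := ∏ j ∈ Finset.range m, qintx x ((j : ℤ) + 1)

/-- Quantum factorial `[m]_q!`. -/
def qfact (m : ℕ) : K := qfactx qq m

/-- Gaussian binomial coefficient at base `x` (zero when `r > m`). -/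
def qbinomx (x : K) (m r : ℕ) : K :=
  if r ≤ m then qfactx x m / (qfactx x r * qfactx x (m - r)) else 0

/-- Gaussian binomial coefficient. -/
def qbinom (m r : ℕ) : K := qbinomx qq m r

/-- The ı-divided powers `B^{(m)}_{p̄}` of `B` with central parameter `Z`,
given by the closed product formulas of the paper. -/
def iDP {A : Type*} [Ring A] [Algebra K A] (B Z : A) (p : ZMod 2) (m : ℕ) : A :=
  (qfact m)⁻¹ •
    ((if m % 2 = 1 then B else 1) *
      ((List.range (m / 2)).map (fun j =>
        B ^ 2 -
          ((qint (if p = 1 then 2 * (j : ℤ) + 1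
                  else if m % 2 = 1 then 2 * (j : ℤ) + 2 else 2 * (j : ℤ))) ^ 2 * qq) • Z)).prod)

/-- The usual divided power `x^{(k)} = x^k/[k]_q!`. -/
def dp {A : Type*} [Ring A] [Algebra K A] (x : A) (k : ℕ) : A := (qfact k)⁻¹ • x ^ k

/-! The ı-divided powers satisfy a two-step recursion in which `B²` raises the degree by two up to
a multiple of `qZ`. Hence `Y ↦ B²Y - (q^{n+1} + q^{-n-1}) BYB + YB² - [n+1]² qZ Y` sends the ıSerre
sum of degree `n` to `[n+1][n+2]` times the one of degree `n + 2`: the terms without `Z` combine by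
`[r][r-1] + [s][s-1] + (q^{n+1} + q^{-n-1})[r][s] = [n+1][n+2]` for `r + s = n + 2`, and the terms
with `Z` cancel in pairs by `[a]² + [b]² + (q^{n+1} + q^{-n-1})[a][b] = [n+1]²` for `a + b = n + 1`.
As `q` is not a root of unity, each ıSerre relation implies the one two degrees higher. -/

open Finset.HasAntidiagonal (antidiagonal mem_antidiagonal)

section QuantumIntegers

theorem qq_ne_zero : qq ≠ 0 := RatFunc.X_ne_zero

theorem qq_pow_ne_one {n : ℕ} (hn : n ≠ 0) : qq ^ n ≠ 1 := by
  intro h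
  have hdeg := congrArg RatFunc.intDegree h
  rw [qq, ← RatFunc.algebraMap_X, ← map_pow, RatFunc.intDegree_polynomial] at hdeg
  simp [hn] at hdeg

theorem qq_sub_inv_ne_zero : qq - qq⁻¹ ≠ 0 := by
  intro h
  have hq := qq_ne_zero
  rw [sub_eq_zero, ← mul_eq_one_iff_eq_inv₀ hq, ← pow_two] at h
  exact qq_pow_ne_one two_ne_zero h

theorem qint_zero : qint 0 = 0 := by simp [qint, qintx]

theorem qint_one : qint 1 = 1 := by
  simpa [qint, qintx] using div_self qq_sub_inv_ne_zero

theorem qint_natCast_ne_zero {n : ℕ} (hn : n ≠ 0) : qint n ≠ 0 := by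
  refine div_ne_zero (fun h => ?_) qq_sub_inv_ne_zero
  have hq : qq ^ n ≠ 0 := pow_ne_zero _ qq_ne_zero
  rw [zpow_neg, zpow_natCast, sub_eq_zero, ← mul_eq_one_iff_eq_inv₀ hq, ← pow_two, ← pow_mul] at h
  exact qq_pow_ne_one (mul_ne_zero hn two_ne_zero) h

/-- The symmetric Laurent monomial `q ^ m + q ^ (-m)`, which is `[2m] / [m]` for `m ≠ 0`. -/
def qsymm (m : ℤ) : K := qq ^ m + qq ^ (-m)

theorem qint_mul_qint_sub_add (a b k : ℤ) :
    qint a * qint (a - k) + qint b * qint (b - k)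
        + qsymm (a + b - k) * (qint a * qint b) =
      qint (a + b - k) * qint (a + b) := by
  have hq := qq_ne_zero
  have hd := qq_sub_inv_ne_zero
  have ha : qq ^ a ≠ 0 := zpow_ne_zero a hq
  have hb : qq ^ b ≠ 0 := zpow_ne_zero b hq
  have hk : qq ^ k ≠ 0 := zpow_ne_zero k hq
  simp only [qint, qintx, qsymm, zpow_neg, zpow_add₀ hq, zpow_sub₀ hq]
  generalize qq - qq⁻¹ = d at hd ⊢
  field_simp
  ring

theorem qfact_zero : qfact 0 = 1 := by simp [qfact, qfactx]

theorem qfact_succ (m : ℕ) : qfact (m + 1) = qfact m * qint (m + 1) := by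
  simp [qfact, qfactx, qint, Finset.prod_range_succ]

theorem qint_succ_mul_inv_qfact_succ (m : ℕ) :
    qint (m + 1) * (qfact (m + 1))⁻¹ = (qfact m)⁻¹ := by
  have h : qint (m + 1) ≠ 0 := mod_cast qint_natCast_ne_zero m.succ_ne_zero
  rw [qfact_succ, mul_inv, mul_left_comm, mul_inv_cancel₀ h, mul_one]

end QuantumIntegers

section DividedPowers

-- By default `ℕ` and `ℤ` act on `K` through `ℚ[X]`, and `module` fails to unify these actions with
-- the ones it expects.
attribute [local instance] Semiring.toNatAlgebra Ring.toIntAlgebra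

variable {A : Type*} [Ring A] [Algebra K A]

/-- The balanced product `∏ (B - [m - 1 - 2k] √(qZ))` over `0 ≤ k < m`, with the factors of
opposite weights multiplied together. It is `[m]!` times the ı-divided power `B^{(m)}` of
parity `m + 1`. -/
def balancedProd (B Z : A) : ℕ → A
  | 0 => 1
  | 1 => B
  | m + 2 => balancedProd B Z m * (B ^ 2 - (qint (m + 1) ^ 2 * qq) • Z)

section Products

variable (B Z : A)

theorem list_prod_odd_eq_balancedProd (k : ℕ) :
    ((List.range k).map fun j : ℕ => B ^ 2 - (qint (2 * (j : ℤ) + 1) ^ 2 * qq) • Z).prod =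
      balancedProd B Z (2 * k) := by
  induction k with
  | zero => simp [balancedProd]
  | succ k ih => simp [List.range_succ, mul_add, balancedProd, ih]

theorem mul_list_prod_even_eq_balancedProd (k : ℕ) :
    B * ((List.range k).map fun j : ℕ => B ^ 2 - (qint (2 * (j : ℤ) + 2) ^ 2 * qq) • Z).prod =
      balancedProd B Z (2 * k + 1) := by
  induction k with
  | zero => simp [balancedProd]
  | succ k ih => simp [List.range_succ, mul_add, balancedProd, ← mul_assoc, ih, add_assoc]

theorem zmodTwo_eq_add_one_of_ne {a b : ZMod 2} (h : a ≠ b) : a = b + 1 := by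
  revert a b
  decide

-- In `iDP` the range is coerced to a `List ℤ`; here its index is a natural number.
theorem iDP_eq_map_range (p : ZMod 2) (m : ℕ) :
    iDP B Z p m = (qfact m)⁻¹ •
      ((if m % 2 = 1 then B else 1) * ((List.range (m / 2)).map fun j : ℕ =>
        B ^ 2 - (qint (if p = 1 then 2 * (j : ℤ) + 1
          else if m % 2 = 1 then 2 * (j : ℤ) + 2 else 2 * (j : ℤ)) ^ 2 * qq) • Z).prod) := by
  simp [iDP, Function.comp_def, ← List.map_eq_flatMap]

variable {p : ZMod 2} {m : ℕ}

theorem iDP_of_ne (hp : p ≠ m) : iDP B Z p m = (qfact m)⁻¹ • balancedProd B Z m := by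
  rw [zmodTwo_eq_add_one_of_ne hp, iDP_eq_map_range]
  obtain ⟨k, rfl | rfl⟩ := m.even_or_odd'
  · simp [list_prod_odd_eq_balancedProd, CharTwo.two_eq_zero]
  · simp [← mul_list_prod_even_eq_balancedProd, CharTwo.two_eq_zero, Nat.mul_add_div]

theorem iDP_succ_of_ne (hp : p ≠ m) :
    iDP B Z p (m + 1) = (qfact (m + 1))⁻¹ • (B * balancedProd B Z m) := by
  rw [zmodTwo_eq_add_one_of_ne hp, iDP_eq_map_range]
  obtain ⟨k, rfl | rfl⟩ := m.even_or_odd'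
  · simp [list_prod_odd_eq_balancedProd, CharTwo.two_eq_zero, Nat.mul_add_div]
  · rw [show 2 * k + 1 + 1 = 2 * (k + 1) by ring]
    simp [← mul_list_prod_even_eq_balancedProd, CharTwo.two_eq_zero, List.range_succ_eq_map,
      qint_zero, Function.comp_def, mul_add, pow_two, mul_assoc]

end Products

section Recursion

variable {B Z : A} {p : ZMod 2} {m : ℕ}

theorem mul_iDP_of_ne (hp : p ≠ m) :
    B * iDP B Z p m = qint (m + 1) • iDP B Z p (m + 1) := by
  rw [iDP_of_ne B Z hp, iDP_succ_of_ne B Z hp, mul_smul_comm, smul_smul,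
    qint_succ_mul_inv_qfact_succ]

theorem commute_balancedProd {C : A} (hCB : Commute C B) (hCZ : Commute C Z) (m : ℕ) :
    Commute C (balancedProd B Z m) := by
  induction m using balancedProd.induct with
  | case1 => exact Commute.one_right C
  | case2 => exact hCB
  | case3 m ih => exact ih.mul_right ((hCB.pow_right 2).sub_right (hCZ.smul_right _))

theorem commute_iDP {C : A} (hCB : Commute C B) (hCZ : Commute C Z) (p : ZMod 2) (m : ℕ) :
    Commute C (iDP B Z p m) := by
  by_cases hp : p = m
  · cases m with
    | zero => simp [iDP, qfact_zero]
    | succ m =>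
      rw [iDP_succ_of_ne B Z (by simp [hp])]
      exact (hCB.mul_right (commute_balancedProd hCB hCZ m)).smul_right _
  · rw [iDP_of_ne B Z hp]
    exact (commute_balancedProd hCB hCZ m).smul_right _

theorem sq_mul_iDP_of_ne (hZB : Commute Z B) (hp : p ≠ m) :
    B ^ 2 * iDP B Z p m = (qint (m + 1) * qint (m + 2)) • iDP B Z p (m + 2)
      + (qint (m + 1) ^ 2 * qq) • (Z * iDP B Z p m) := by
  have hp' : p ≠ (m + 2 : ℕ) := by simpa [CharTwo.two_eq_zero] using hp
  have hB : Commute (B ^ 2) (balancedProd B Z m) :=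
    (commute_balancedProd (Commute.refl B) hZB.symm m).pow_left 2
  have hZ : Commute Z (balancedProd B Z m) := commute_balancedProd hZB (Commute.refl Z) m
  have hq : qint (m + 1) * qint (m + 2) * (qfact (m + 2))⁻¹ = (qfact m)⁻¹ := by
    rw [← qint_succ_mul_inv_qfact_succ m, ← qint_succ_mul_inv_qfact_succ (m + 1)]
    push_cast
    ring_nf
  rw [iDP_of_ne B Z hp, iDP_of_ne B Z hp', smul_smul, hq, balancedProd, mul_sub, mul_smul_comm,
    mul_smul_comm, mul_smul_comm, hB.eq, hZ.eq]
  module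

-- For `m = 0` the truncated index `m - 1` comes with the coefficient `[0] = 0`.
theorem mul_iDP_of_eq (hZB : Commute Z B) (hp : p = m) :
    B * iDP B Z p m = qint (m + 1) • iDP B Z p (m + 1)
      + (qint m * qq) • (Z * iDP B Z p (m - 1)) := by
  cases m with
  | zero => simp [iDP, qfact_zero, qfact_succ, qint_zero, qint_one]
  | succ m =>
    have hpm : p ≠ m := by simp [hp]
    have hm : qint (m + 1) ≠ 0 := mod_cast qint_natCast_ne_zero m.succ_ne_zero
    apply smul_right_injective A hm
    calc qint (m + 1) • (B * iDP B Z p (m + 1))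
        = B ^ 2 * iDP B Z p m := by rw [pow_two, mul_assoc, mul_iDP_of_ne hpm, mul_smul_comm]
      _ = _ := by
        rw [sq_mul_iDP_of_ne hZB hpm]
        push_cast
        rw [add_assoc (m : ℤ), one_add_one_eq_two]
        module

theorem sq_mul_iDP_of_eq (hZB : Commute Z B) (hp : p = m) :
    B ^ 2 * iDP B Z p m = (qint (m + 1) * qint (m + 2)) • iDP B Z p (m + 2)
      + (qint m ^ 2 * qq) • (Z * iDP B Z p m) := by
  have hsucc : B * iDP B Z p (m + 1) = qint (m + 2) • iDP B Z p (m + 2) := by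
    rw [mul_iDP_of_ne (by simp [hp])]
    push_cast
    ring_nf
  have hpred : qint m • (B * iDP B Z p (m - 1)) = qint m ^ 2 • iDP B Z p m := by
    cases m with
    | zero => simp [qint_zero]
    | succ m =>
      rw [add_tsub_cancel_right, mul_iDP_of_ne (by simp [hp]), smul_smul, pow_two]
      push_cast
      rfl
  rw [pow_two, mul_assoc, mul_iDP_of_eq hZB hp, mul_add, mul_smul_comm, mul_smul_comm,
    hsucc, ← mul_assoc, ← hZB.eq, mul_assoc, ← mul_smul_comm, mul_comm (qint m), mul_smul, hpred]
  simp only [mul_smul_comm]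
  module

end Recursion

section AlternatingSums

variable {M : Type*} [AddCommGroup M]

theorem sum_antidiagonal_alternating_telescope {R : Type*} [Ring R] [Module R M] (n : ℕ)
    (g : ℕ → ℕ → M) :
    ∑ rs ∈ antidiagonal n, (-1 : R) ^ rs.1 • (g rs.1 (rs.2 + 1) + g (rs.1 + 1) rs.2) =
      g 0 (n + 1) + (-1 : R) ^ n • g (n + 1) 0 := by
  have h := (Finset.Nat.sum_antidiagonal_succ' (n := n)
    (f := fun rs => (-1 : R) ^ rs.1 • g rs.1 rs.2)).symm.trans Finset.Nat.sum_antidiagonal_succ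
  simp only [pow_succ, mul_neg_one, neg_smul, pow_zero, one_smul, Finset.sum_neg_distrib] at h
  simp only [smul_add, Finset.sum_add_distrib]
  rw [← sub_eq_zero] at h ⊢
  rw [← h]
  abel

variable [Module K M]

theorem smul_sum_antidiagonal_add_two (n : ℕ) (f : ℕ → ℕ → M) :
    (qint (n + 1) * qint (n + 2)) • ∑ rs ∈ antidiagonal (n + 2), (-1 : K) ^ rs.1 • f rs.1 rs.2 =
      ∑ rs ∈ antidiagonal n, (-1 : K) ^ rs.1 •
        ((qint (rs.1 + 1) * qint (rs.1 + 2)) • f (rs.1 + 2) rs.2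
          + (qint (rs.2 + 1) * qint (rs.2 + 2)) • f rs.1 (rs.2 + 2)
          - (qsymm (n + 1) * (qint (rs.1 + 1) * qint (rs.2 + 1))) • f (rs.1 + 1) (rs.2 + 1)) := by
  have hcoeff : ∀ rs ∈ antidiagonal (n + 2),
      (qint (n + 1) * qint (n + 2)) • ((-1 : K) ^ rs.1 • f rs.1 rs.2) =
        (-1 : K) ^ rs.1 • (qint rs.1 * qint (rs.1 - 1)) • f rs.1 rs.2
        + (-1 : K) ^ rs.1 • (qint rs.2 * qint (rs.2 - 1)) • f rs.1 rs.2
        + (-1 : K) ^ rs.1 • (qsymm (n + 1) * (qint rs.1 * qint rs.2)) • f rs.1 rs.2 := by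
    rintro ⟨r, s⟩ hrs
    have hsum : (r + s : ℤ) = n + 2 := mod_cast mem_antidiagonal.mp hrs
    have hid := qint_mul_qint_sub_add r s 1
    rw [hsum, show (n + 2 - 1 : ℤ) = n + 1 by ring] at hid
    rw [← hid]
    module
  -- Peel off the two terms of each sum that vanish because `[0] = 0` or `[1 - 1] = 0`.
  rw [Finset.smul_sum, Finset.sum_congr rfl hcoeff, Finset.sum_add_distrib, Finset.sum_add_distrib,
    Finset.Nat.sum_antidiagonal_succ, Finset.Nat.sum_antidiagonal_succ,
    Finset.Nat.sum_antidiagonal_succ' (n := n + 1), Finset.Nat.sum_antidiagonal_succ' (n := n),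
    Finset.Nat.sum_antidiagonal_succ' (n := n + 1), Finset.Nat.sum_antidiagonal_succ (n := n)]
  simp only [Nat.cast_zero, Nat.cast_one, zero_add, qint_zero, sub_self, zero_mul, mul_zero,
    zero_smul, smul_zero]
  rw [← Finset.sum_add_distrib, ← Finset.sum_add_distrib]
  refine Finset.sum_congr rfl fun rs _ => ?_
  have hcast (m : ℕ) : ((m + 1 + 1 : ℕ) : ℤ) = m + 2 := by push_cast; ring
  have hpred (m : ℕ) : (m + 2 - 1 : ℤ) = m + 1 := by ring
  simp only [hcast, hpred, Nat.cast_succ]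
  module

end AlternatingSums

section SerreSum

/-- The summand `B^{(r)}_p X B^{(s)}_{p'}` of an ıSerre relation, with the two parities kept
independent. -/
def iSerreTerm (B X Z : A) (p p' : ZMod 2) (r s : ℕ) : A := iDP B Z p r * X * iDP B Z p' s

/-- The left-hand side `∑_{r+s=n} (-1)^r B^{(r)}_p X B^{(s)}_{p+n+1}` of the ıSerre relation of
degree `n`. In the paper `n = 1 - N a_{ij} + 2u` and `X = B_j ^ N`, so the second parity
`p + n + 1` is `p + N a_{ij}`. -/
def iSerreSum (B X Z : A) (p : ZMod 2) (n : ℕ) : A :=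
  ∑ rs ∈ antidiagonal n,
    (-1 : K) ^ rs.1 • iSerreTerm B X Z p (p + n + 1) rs.1 rs.2

/-- The operator `Y ↦ B²Y - (q^m + q^{-m}) BYB + YB² - [m]² qZ Y`, which for `m = n + 1` carries the
ıSerre sum of degree `n` to a multiple of the one of degree `n + 2`. -/
def iSerreStep (B Z : A) (m : ℤ) : A →ₗ[K] A :=
  LinearMap.mulLeft K (B ^ 2)
    - qsymm m • (LinearMap.mulLeft K B ∘ₗ LinearMap.mulRight K B)
    + LinearMap.mulRight K (B ^ 2) - (qint m ^ 2 * qq) • LinearMap.mulLeft K Z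

theorem iSerreStep_apply (B Z Y : A) (m : ℤ) :
    iSerreStep B Z m Y = B ^ 2 * Y - qsymm m • (B * (Y * B)) + Y * B ^ 2
      - (qint m ^ 2 * qq) • (Z * Y) := rfl

theorem iSerreStep_mul_mul {B X Z a b : A} (hBb : Commute B b) (m : ℤ) :
    iSerreStep B Z m (a * X * b) = B ^ 2 * a * X * b
      - qsymm m • (B * a * X * (B * b)) + a * X * (B ^ 2 * b)
      - (qint m ^ 2 * qq) • (Z * (a * X * b)) := by
  rw [iSerreStep_apply, mul_assoc _ b B, ← hBb.eq, mul_assoc _ b, ← (hBb.pow_left 2).eq]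
  simp only [mul_assoc]

variable {B X Z : A} {p p' : ZMod 2} {r s : ℕ}

/-- The terms in `Z` produced by `iSerreStep` at `(r, s)` are the sum of the fluxes at `(r, s + 1)`
and `(r + 1, s)`, so that they telescope in an alternating sum. At `r = 0` or `s = 0` the truncated
index `r - 1` or `s - 1` comes with the coefficient `[0] = 0`. -/
def iSerreFlux (B X Z : A) (p p' : ZMod 2) (r s : ℕ) : A :=
  if p = r then (qint r * qint s) •
    (iSerreTerm B X Z p p' (r - 1) s + iSerreTerm B X Z p p' r (s - 1)) else 0

theorem iSerreStep_iSerreTerm (hZB : Commute Z B) (hZX : Commute Z X)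
    (hp' : p' = p + r + s + 1) :
    iSerreStep B Z (r + s + 1) (iSerreTerm B X Z p p' r s) =
      (qint (r + 1) * qint (r + 2)) • iSerreTerm B X Z p p' (r + 2) s
      + (qint (s + 1) * qint (s + 2)) • iSerreTerm B X Z p p' r (s + 2)
      - (qsymm (r + s + 1) * (qint (r + 1) * qint (s + 1))) •
          iSerreTerm B X Z p p' (r + 1) (s + 1)
      - (qsymm (r + s + 1) * qq) •
          (Z * (iSerreFlux B X Z p p' r (s + 1) + iSerreFlux B X Z p p' (r + 1) s)) := by
  have hB (q : ZMod 2) (m : ℕ) := commute_iDP (Commute.refl B) hZB.symm q m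
  have hZ (q : ZMod 2) (m : ℕ) := commute_iDP hZB (Commute.refl Z) q m
  have hZZ (m : ℕ) (w : A) : iDP B Z p m * (X * (Z * w)) = Z * (iDP B Z p m * (X * w)) := by
    simp only [← mul_assoc, ((hZ p m).mul_right hZX).eq]
  rw [iSerreTerm, iSerreStep_mul_mul (hB p' s)]
  by_cases hr : p = r
  · have hs : p' ≠ s := by simp [hp', hr, CharTwo.add_self_eq_zero]
    have hr' : p ≠ r + 1 := by simp [hr]
    have hq := qint_mul_qint_sub_add r (s + 1) 0
    simp only [sub_zero, ← add_assoc] at hq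
    rw [sq_mul_iDP_of_eq hZB hr, sq_mul_iDP_of_ne hZB hs, mul_iDP_of_eq hZB hr, mul_iDP_of_ne hs]
    simp only [iSerreFlux, if_pos hr, if_neg hr', iSerreTerm, add_mul, mul_add, smul_mul_assoc,
      mul_smul_comm, mul_assoc, hZZ, mul_zero, Nat.add_sub_cancel, Nat.cast_succ]
    linear_combination (norm := module) (qq * hq) • (Z * (iDP B Z p r * (X * iDP B Z p' s)))
  · have hr' : p = r + 1 := zmodTwo_eq_add_one_of_ne hr
    have hs : p' = s := by
      rw [hp', hr']
      linear_combination (r + 1 : ZMod 2) * (CharTwo.two_eq_zero : (2 : ZMod 2) = 0)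
    have hq := qint_mul_qint_sub_add (r + 1) s 0
    simp only [sub_zero, add_right_comm _ (1 : ℤ)] at hq
    rw [sq_mul_iDP_of_ne hZB hr, sq_mul_iDP_of_eq hZB hs, mul_iDP_of_ne hr, mul_iDP_of_eq hZB hs]
    simp only [iSerreFlux, if_neg hr, if_pos hr', iSerreTerm, add_mul, mul_add, smul_mul_assoc,
      mul_smul_comm, mul_assoc, hZZ, mul_zero, Nat.add_sub_cancel, Nat.cast_succ]
    linear_combination (norm := module) (qq * hq) • (Z * (iDP B Z p r * (X * iDP B Z p' s)))

theorem iSerreStep_iSerreSum (hZB : Commute Z B) (hZX : Commute Z X) (p : ZMod 2) (n : ℕ) :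
    iSerreStep B Z (n + 1) (iSerreSum B X Z p n) =
      (qint (n + 1) * qint (n + 2)) • iSerreSum B X Z p (n + 2) := by
  have hparity : p + ((n + 2 : ℕ) : ZMod 2) + 1 = p + n + 1 := by simp [CharTwo.two_eq_zero]
  rw [iSerreSum, iSerreSum, hparity, smul_sum_antidiagonal_add_two, map_sum, ← sub_eq_zero,
    ← Finset.sum_sub_distrib]
  calc _ = ∑ rs ∈ antidiagonal n, -((qsymm (n + 1) * qq) • (Z * ((-1 : K) ^ rs.1 •
          (iSerreFlux B X Z p (p + n + 1) rs.1 (rs.2 + 1)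
            + iSerreFlux B X Z p (p + n + 1) (rs.1 + 1) rs.2)))) := by
        refine Finset.sum_congr rfl fun rs hrs => ?_
        obtain rfl := mem_antidiagonal.mp hrs
        rw [map_smul, Nat.cast_add, iSerreStep_iSerreTerm hZB hZX (by simp [add_assoc]),
          mul_smul_comm]
        module
    _ = 0 := by
        rw [Finset.sum_neg_distrib, ← Finset.smul_sum, ← Finset.mul_sum,
          sum_antidiagonal_alternating_telescope]
        simp [iSerreFlux, qint_zero]

theorem iSerreSum_eq_sum_range (B X Z : A) (p : ZMod 2) {n : ℕ} (hn : Even n) :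
    iSerreSum B X Z p n = ∑ r ∈ Finset.range (n + 1),
      (-1 : K) ^ r • (iDP B Z p r * X * iDP B Z (p + 1) (n - r)) := by
  rw [iSerreSum, ZMod.natCast_eq_zero_iff_even.mpr hn, add_zero]
  exact Finset.Nat.sum_antidiagonal_eq_sum_range_succ
    (fun r s => (-1 : K) ^ r • iSerreTerm B X Z p (p + 1) r s) n

theorem stmt7_general (hZB : Commute Z B) (hZX : Commute Z X) {p : ZMod 2} {n : ℕ}
    (h : iSerreSum B X Z p n = 0) (u : ℕ) : iSerreSum B X Z p (n + 2 * u) = 0 := by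
  induction u with
  | zero => exact h
  | succ u ih =>
    have hstep := iSerreStep_iSerreSum hZB hZX p (n + 2 * u)
    have h₁ := qint_natCast_ne_zero (n + 2 * u).succ_ne_zero
    have h₂ := qint_natCast_ne_zero (n + 2 * u + 1).succ_ne_zero
    rw [ih, map_zero, eq_comm, smul_eq_zero_iff_right] at hstep
    · exact hstep
    · exact mod_cast mul_ne_zero h₁ h₂

end SerreSum

end DividedPowers

theorem stmt7 {A : Type*} [Ring A] [Algebra K A] (Bi Bj Z : A)
    (hZ : ∀ a : A, Z * a = a * Z)
    (h : ∀ p : ZMod 2, ∑ r ∈ Finset.range 3,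
        ((-1 : K) ^ r) • (iDP Bi Z p r * Bj * iDP Bi Z (p + 1) (2 - r)) = 0) :
    ∀ p : ZMod 2, ∑ r ∈ Finset.range 5,
        ((-1 : K) ^ r) • (iDP Bi Z p r * Bj * iDP Bi Z (p + 1) (4 - r)) = 0 := by
  simp only [← iSerreSum_eq_sum_range Bi Bj Z _ (n := 2) (by decide),
    ← iSerreSum_eq_sum_range Bi Bj Z _ (n := 4) (by decide)] at h ⊢
  exact fun p => stmt7_general (hZ Bi) (hZ Bj) (h p) 1
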